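/- arXiv:2009.06473 — 12 statements merged into one kernel-verified Lean document; each statement's English description precedes it below -/
import Mathlib

section
/- Every fraction appearing in the Calkin–Wilf tree is irreducible: for every finite binary sequence s, writing cw(s) = (x, y), one has x ≥ 1, y ≥ 1, and gcd(x, y) = 1. -/
/-! Positivity and coprimality hold at the root `(1, 1)` and pass from a vertex to its two children:
adding one positive coordinate to the other keeps both positive, and
`gcd (x, x + y) = gcd (x + y, y) = gcd (x, y)`. -/

def cwStep : ℕ × ℕ → Bool → ℕ × ℕ
  | (x, y), false => (x, x + y)
  | (x, y), true => (x + y, y)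

/-- The Calkin–Wilf tree: `cw [] = (1,1)`, and if `cw s = (x,y)` then
`cw (s ++ [false]) = (x, x+y)` and `cw (s ++ [true]) = (x+y, y)`. -/
def cw (s : List Bool) : ℕ × ℕ := s.foldl cwStep (1, 1)

/-- Every fraction appearing in the Calkin–Wilf tree is irreducible. -/
theorem calkinWilf_irreducible :
    ∀ s : List Bool, ∀ x y : ℕ, cw s = (x, y) → 1 ≤ x ∧ 1 ≤ y ∧ Nat.gcd x y = 1 := by
  intro s
  -- Reverse induction, since the recursion for `cw` appends the new letter at the end of `s`.
  induction s using List.reverseRecOn with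
  | nil =>
    rintro x y h
    simp only [cw, List.foldl_nil, Prod.mk.injEq] at h
    obtain ⟨rfl, rfl⟩ := h
    simp
  | append_singleton s b ih =>
    intro x y h
    obtain ⟨hx, hy, hg⟩ := ih (cw s).1 (cw s).2 rfl
    have key : cw (s ++ [b]) = cwStep ((cw s).1, (cw s).2) b := by
      simp [cw, List.foldl_append]
    rw [key] at h
    cases b <;> simp only [cwStep, Prod.mk.injEq] at h <;> obtain ⟨rfl, rfl⟩ := h
    · exact ⟨hx, by omega, by simpa using hg⟩
    · exact ⟨by omega, hy, by simpa using hg⟩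
end

section
/- The Calkin–Wilf tree enumerates the positive rational numbers without repetition: the map sending a finite binary sequence s to the rational number x/y, where cw(s) = (x, y), is a bijection from the set of finite binary sequences onto the set of positive rational numbers. -/
theorem cw_append_false (s : List Bool) :
    cw (s ++ [false]) = ((cw s).1, (cw s).1 + (cw s).2) := by
  simp [cw, cwStep]

theorem cw_append_true (s : List Bool) :
    cw (s ++ [true]) = ((cw s).1 + (cw s).2, (cw s).2) := by
  simp [cw, cwStep]

theorem cw_pos_coprime (s : List Bool) :
    0 < (cw s).1 ∧ 0 < (cw s).2 ∧ Nat.Coprime (cw s).1 (cw s).2 := by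
  induction s using List.reverseRecOn with
  | nil => simp [cw]
  | append_singleton s b ih =>
    obtain ⟨hx, hy, hc⟩ := ih
    cases b
    · rw [cw_append_false]
      exact ⟨hx, by simp only; omega, by simpa using hc⟩
    · rw [cw_append_true]
      exact ⟨by simp only; omega, hy, by simpa using hc⟩

theorem cw_injective : Function.Injective cw := by
  have hnil : cw [] = (1, 1) := rfl
  intro s
  induction s using List.reverseRecOn with
  | nil =>
    intro t h
    cases t using List.reverseRecOn with
    | nil => rfl
    | append_singleton t c =>
      have ht := cw_pos_coprime t
      cases c <;> simp only [hnil, cw_append_false, cw_append_true, Prod.mk.injEq] at h <;> omega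
  | append_singleton s b ih =>
    intro t h
    have hs := cw_pos_coprime s
    cases t using List.reverseRecOn with
    | nil =>
      cases b <;> simp only [hnil, cw_append_false, cw_append_true, Prod.mk.injEq] at h <;> omega
    | append_singleton t c =>
      have ht := cw_pos_coprime t
      cases b <;> cases c <;>
        simp only [cw_append_false, cw_append_true, Prod.mk.injEq] at h
      · rw [ih (Prod.ext (by omega) (by omega) : cw s = cw t)]
      · omega
      · omega
      · rw [ih (Prod.ext (by omega) (by omega) : cw s = cw t)]

theorem exists_cw_eq (x y : ℕ) (hx : 0 < x) (hy : 0 < y) (hc : Nat.Coprime x y) :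
    ∃ s, cw s = (x, y) := by
  induction hn : x + y using Nat.strong_induction_on generalizing x y with
  | _ n ih =>
    rcases lt_trichotomy x y with h | h | h
    · obtain ⟨z, rfl⟩ := Nat.exists_eq_add_of_lt h
      obtain ⟨s, hs⟩ := ih (x + (z + 1)) (by omega) x (z + 1) hx (by omega)
        (by simpa [add_assoc] using hc) rfl
      exact ⟨s ++ [false], by rw [cw_append_false, hs, add_assoc]⟩
    · subst h
      rw [Nat.coprime_self] at hc
      exact ⟨[], by rw [hc]; rfl⟩
    · obtain ⟨z, rfl⟩ := Nat.exists_eq_add_of_lt h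
      obtain ⟨s, hs⟩ := ih (z + 1 + y) (by omega) (z + 1) y (by omega) hy
        (by simpa [add_assoc] using hc) rfl
      exact ⟨s ++ [true], by rw [cw_append_true, hs, add_comm (z + 1), add_assoc]⟩

/-- The Calkin–Wilf tree enumerates the positive rationals without repetition:
`s ↦ x / y` (where `cw s = (x, y)`) is injective with range exactly the set of
positive rational numbers. -/
theorem calkinWilf_bijective :
    Function.Injective (fun s : List Bool => ((cw s).1 : ℚ) / ((cw s).2 : ℚ)) ∧
      Set.range (fun s : List Bool => ((cw s).1 : ℚ) / ((cw s).2 : ℚ)) = {q : ℚ | 0 < q} := by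
  refine ⟨fun s t h => cw_injective ?_, Set.eq_of_subset_of_subset ?_ fun q hq => ?_⟩
  · obtain ⟨-, hs, hsc⟩ := cw_pos_coprime s
    obtain ⟨-, ht, htc⟩ := cw_pos_coprime t
    have h' := Rat.div_int_inj (a := (cw s).1) (b := (cw s).2) (c := (cw t).1) (d := (cw t).2)
      (by exact_mod_cast hs) (by exact_mod_cast ht) hsc htc (by simpa only [Int.cast_natCast] using h)
    exact Prod.ext (by exact_mod_cast h'.1) (by exact_mod_cast h'.2)
  · rintro _ ⟨s, rfl⟩
    obtain ⟨hx, hy, -⟩ := cw_pos_coprime s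
    exact div_pos (Nat.cast_pos.2 hx : (0 : ℚ) < _) (Nat.cast_pos.2 hy)
  · have hnum : 0 < q.num := Rat.num_pos.2 hq
    obtain ⟨s, hs⟩ := exists_cw_eq q.num.natAbs q.den (by omega) q.den_pos q.reduced
    refine ⟨s, ?_⟩
    have habs : ((q.num.natAbs : ℕ) : ℚ) = (q.num : ℚ) := by
      rw [Nat.cast_natAbs, abs_of_pos hnum]
    simp only [hs, habs, Rat.num_div_den]
end

section
/- For every finite binary sequence s, writing sb(s) = ((a,b),(c,d)), the bounding pair satisfies the determinant identity c·b − a·d = 1; consequently gcd(a+c, b+d) = 1, i.e. every fraction appearing in the Stern–Brocot tree is irreducible. -/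
/-! A step in the tree replaces one column of the matrix `(c a; d b)` by the sum of its two
columns, which leaves the determinant `c * b - a * d` unchanged; it is `1` at the root, hence
everywhere. Replacing `c, d` by the mediant gives `(a + c) * b - a * (b + d) = 1`, a Bézout
relation for `a + c` and `b + d`. -/

def sbStep : (ℕ × ℕ) × (ℕ × ℕ) → Bool → (ℕ × ℕ) × (ℕ × ℕ)
  | ((a, b), (c, d)), false => ((a, b), (a + c, b + d))
  | ((a, b), (c, d)), true => ((a + c, b + d), (c, d))

/-- The Stern–Brocot bounding-pair map: `sb [] = ((0,1),(1,0))`, and if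
`sb s = ((a,b),(c,d))` then `sb (s ++ [false]) = ((a,b),(a+c,b+d))` and
`sb (s ++ [true]) = ((a+c,b+d),(c,d))`. -/
def sb (s : List Bool) : (ℕ × ℕ) × (ℕ × ℕ) := s.foldl sbStep ((0, 1), (1, 0))

theorem sbStep_det (p : (ℕ × ℕ) × (ℕ × ℕ)) (x : Bool) :
    ((sbStep p x).2.1 : ℤ) * (sbStep p x).1.2 - (sbStep p x).1.1 * (sbStep p x).2.2 =
      p.2.1 * p.1.2 - p.1.1 * p.2.2 := by
  obtain ⟨⟨a, b⟩, c, d⟩ := p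
  cases x <;> simp only [sbStep] <;> push_cast <;> ring

theorem sb_det (s : List Bool) :
    ((sb s).2.1 : ℤ) * (sb s).1.2 - (sb s).1.1 * (sb s).2.2 = 1 := by
  induction s using List.reverseRecOn with
  | nil => simp [sb]
  | append_singleton s x ih =>
    have h : sb (s ++ [x]) = sbStep (sb s) x := by simp [sb]
    rw [h, sbStep_det, ih]

/-- The Stern–Brocot determinant identity `c·b − a·d = 1`, and consequently every
fraction appearing in the Stern–Brocot tree is irreducible. -/
theorem sternBrocot_det_and_irreducible :
    ∀ s : List Bool, ∀ a b c d : ℕ, sb s = ((a, b), (c, d)) →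
      (c : ℤ) * (b : ℤ) - (a : ℤ) * (d : ℤ) = 1 ∧ Nat.gcd (a + c) (b + d) = 1 := by
  intro s a b c d h
  have hdet := sb_det s
  rw [h] at hdet
  refine ⟨hdet, Nat.isCoprime_iff_coprime.mp ⟨b, -a, ?_⟩⟩
  push_cast
  linear_combination hdet
end

section
/- The Stern–Brocot tree enumerates the positive rational numbers without repetition: the map sending a finite binary sequence s to the rational number (a+c)/(b+d), where sb(s) = ((a,b),(c,d)), is a bijection from the set of finite binary sequences onto the set of positive rational numbers. -/
/-- The vertex of the Stern–Brocot tree at `s`: the mediant of the bounding pair `sb s`. -/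
def sbVal (s : List Bool) : ℚ :=
  (((sb s).1.1 + (sb s).2.1 : ℕ) : ℚ) / (((sb s).1.2 + (sb s).2.2 : ℕ) : ℚ)

/-- A map commuting with both refinement steps commutes with the whole descent. -/
lemma foldl_sbStep_comm (φ : (ℕ × ℕ) × (ℕ × ℕ) → (ℕ × ℕ) × (ℕ × ℕ))
    (hφ : ∀ M b, sbStep (φ M) b = φ (sbStep M b)) (s : List Bool) (M : (ℕ × ℕ) × (ℕ × ℕ)) :
    s.foldl sbStep (φ M) = φ (s.foldl sbStep M) := by
  induction s generalizing M with
  | nil => rfl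
  | cons b s ih => rw [List.foldl_cons, List.foldl_cons, hφ, ih]

/-- Prepending `false` acts on fractions as `x / y ↦ x / (x + y)`. -/
lemma sb_cons_false (s : List Bool) :
    sb (false :: s) = (((sb s).1.1, (sb s).1.1 + (sb s).1.2),
      ((sb s).2.1, (sb s).2.1 + (sb s).2.2)) := by
  refine foldl_sbStep_comm (fun M => ((M.1.1, M.1.1 + M.1.2), (M.2.1, M.2.1 + M.2.2))) ?_ s
    ((0, 1), (1, 0))
  rintro ⟨⟨a, b⟩, c, d⟩ (_ | _) <;> simp [sbStep] <;> omega

/-- Prepending `true` acts on fractions as `x / y ↦ (x + y) / y`. -/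
lemma sb_cons_true (s : List Bool) :
    sb (true :: s) = (((sb s).1.1 + (sb s).1.2, (sb s).1.2),
      ((sb s).2.1 + (sb s).2.2, (sb s).2.2)) := by
  refine foldl_sbStep_comm (fun M => ((M.1.1 + M.1.2, M.1.2), (M.2.1 + M.2.2, M.2.2))) ?_ s
    ((0, 1), (1, 0))
  rintro ⟨⟨a, b⟩, c, d⟩ (_ | _) <;> simp [sbStep] <;> omega

lemma sb_mediant_pos (s : List Bool) :
    0 < (sb s).1.1 + (sb s).2.1 ∧ 0 < (sb s).1.2 + (sb s).2.2 := by
  induction s with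
  | nil => simp [sb]
  | cons b s ih => cases b <;> simp only [sb_cons_false, sb_cons_true] <;> omega

lemma sbVal_pos (s : List Bool) : 0 < sbVal s :=
  div_pos (Nat.cast_pos.2 (sb_mediant_pos s).1) (Nat.cast_pos.2 (sb_mediant_pos s).2)

lemma sbVal_nil : sbVal [] = 1 := by simp [sbVal, sb]

lemma sbVal_cons_false (s : List Bool) : sbVal (false :: s) = sbVal s / (1 + sbVal s) := by
  have hp : (0 : ℚ) < ((sb s).1.1 + (sb s).2.1 : ℕ) := Nat.cast_pos.2 (sb_mediant_pos s).1
  have hq : (0 : ℚ) < ((sb s).1.2 + (sb s).2.2 : ℕ) := Nat.cast_pos.2 (sb_mediant_pos s).2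
  have e : (sb s).1.1 + (sb s).1.2 + ((sb s).2.1 + (sb s).2.2)
      = ((sb s).1.2 + (sb s).2.2) + ((sb s).1.1 + (sb s).2.1) := by omega
  simp only [sbVal, sb_cons_false, e]
  rw [Nat.cast_add ((sb s).1.2 + (sb s).2.2)]
  field_simp

lemma sbVal_cons_true (s : List Bool) : sbVal (true :: s) = sbVal s + 1 := by
  have hq : (0 : ℚ) < ((sb s).1.2 + (sb s).2.2 : ℕ) := Nat.cast_pos.2 (sb_mediant_pos s).2
  have e : (sb s).1.1 + (sb s).1.2 + ((sb s).2.1 + (sb s).2.2)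
      = ((sb s).1.1 + (sb s).2.1) + ((sb s).1.2 + (sb s).2.2) := by omega
  simp only [sbVal, sb_cons_true, e]
  rw [Nat.cast_add ((sb s).1.1 + (sb s).2.1)]
  field_simp

lemma sbVal_cons_false_lt (s : List Bool) : sbVal (false :: s) < 1 := by
  have h := sbVal_pos s
  rw [sbVal_cons_false, div_lt_one (by linarith)]
  linarith

lemma one_lt_sbVal_cons_true (s : List Bool) : 1 < sbVal (true :: s) := by
  rw [sbVal_cons_true]
  linarith [sbVal_pos s]

lemma sbVal_injective : Function.Injective sbVal := by
  intro s
  induction s with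
  | nil =>
    rintro (_ | ⟨_ | _, t⟩) h
    · rfl
    · linarith [sbVal_nil, sbVal_cons_false_lt t]
    · linarith [sbVal_nil, one_lt_sbVal_cons_true t]
  | cons b s ih =>
    have hs := sbVal_pos s
    rcases b with _ | _ <;> rintro (_ | ⟨_ | _, t⟩) h
    · linarith [sbVal_nil, sbVal_cons_false_lt s]
    · have ht := sbVal_pos t
      rw [sbVal_cons_false, sbVal_cons_false, div_eq_div_iff (by linarith) (by linarith)] at h
      rw [ih (show sbVal s = sbVal t by linarith)]
    · linarith [sbVal_cons_false_lt s, one_lt_sbVal_cons_true t]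
    · linarith [sbVal_nil, one_lt_sbVal_cons_true s]
    · linarith [sbVal_cons_false_lt t, one_lt_sbVal_cons_true s]
    · rw [sbVal_cons_true, sbVal_cons_true] at h
      rw [ih (show sbVal s = sbVal t by linarith)]

/-- Subtractive Euclid: every ratio of positive integers, not necessarily in lowest terms, is a
vertex. The bound `n` on `p + q` only serves the induction. -/
lemma exists_sbVal_eq (n : ℕ) : ∀ p q : ℕ, 0 < p → 0 < q → p + q ≤ n →
    ∃ s, sbVal s = (p : ℚ) / q := by
  induction n with
  | zero => intro p q hp hq h; omega
  | succ n ih =>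
    intro p q hp hq h
    have hp' : (0 : ℚ) < p := Nat.cast_pos.2 hp
    have hq' : (0 : ℚ) < q := Nat.cast_pos.2 hq
    rcases lt_trichotomy p q with hlt | rfl | hlt
    · obtain ⟨r, rfl⟩ := Nat.exists_eq_add_of_lt hlt
      obtain ⟨s, hs⟩ := ih p (r + 1) hp r.succ_pos (by omega)
      refine ⟨false :: s, ?_⟩
      rw [sbVal_cons_false, hs]
      push_cast
      field_simp
      ring
    · exact ⟨[], by rw [sbVal_nil, div_self hp'.ne']⟩
    · obtain ⟨r, rfl⟩ := Nat.exists_eq_add_of_lt hlt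
      obtain ⟨s, hs⟩ := ih (r + 1) q r.succ_pos hq (by omega)
      refine ⟨true :: s, ?_⟩
      rw [sbVal_cons_true, hs]
      push_cast
      field_simp
      ring

/-- The Stern–Brocot tree enumerates the positive rationals without repetition:
`s ↦ (a+c)/(b+d)` (where `sb s = ((a,b),(c,d))`) is injective with range exactly
the set of positive rational numbers. -/
theorem sternBrocot_bijective :
    Function.Injective (fun s : List Bool =>
      (((sb s).1.1 + (sb s).2.1 : ℕ) : ℚ) / (((sb s).1.2 + (sb s).2.2 : ℕ) : ℚ)) ∧
      Set.range (fun s : List Bool =>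
        (((sb s).1.1 + (sb s).2.1 : ℕ) : ℚ) / (((sb s).1.2 + (sb s).2.2 : ℕ) : ℚ)) =
        {q : ℚ | 0 < q} := by
  refine ⟨sbVal_injective, Set.Subset.antisymm ?_ ?_⟩
  · rintro _ ⟨s, rfl⟩
    exact sbVal_pos s
  · intro x (hx : 0 < x)
    have hnum : 0 < x.num := Rat.num_pos.2 hx
    obtain ⟨s, hs⟩ := exists_sbVal_eq _ x.num.toNat x.den (by omega) x.den_pos le_rfl
    refine ⟨s, hs.trans ?_⟩
    have h : ((x.num.toNat : ℕ) : ℚ) = (x.num : ℚ) := by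
      exact_mod_cast congrArg (Int.cast : ℤ → ℚ) (Int.toNat_of_nonneg hnum.le)
    rw [h, Rat.num_div_den]
end

section
/- In the Christoffel tree, all words occurring are Christoffel words: for every finite binary sequence s, writing ch(s) = (u, v), the words u, v, and the concatenation u·v are all Christoffel words. -/
/-!
At each vertex `(u, v)` of the tree, `u` and `v` are the Christoffel words of slopes `q / p` and
`q' / p'` with `p * q' = q * p' + 1`. This unimodularity gives coprimality of both pairs and of
their sum, and it is preserved when either pair is replaced by the sum. What carries the induction
is the standard factorization (`christoffel_append`): under the same relation,
`christoffel (p + p') (q + q') = christoffel p q ++ christoffel p' q'`.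

With `n = p + q`, `n' = p' + q'`, `N = n + n'` and `Q = q + q'`, unimodularity reads `n Q = q N + 1`
and `n' Q + 1 = q' N`. So on the first `n` letters the lines of slopes `Q / N` and `q / n` differ by
at most `1 / N < 1 / n`, too little to cross an integer, and the floors agree; the remaining `n'`
letters are similar, after a shift by `q` (`div_left`, `div_right`).
-/

/-- The lower Christoffel word of slope `q / p`: the word of length `p + q`
whose `i`-th letter (for `1 ≤ i ≤ p + q`) is `a` (encoded `false`) if
`⌊i·q/(p+q)⌋ = ⌊(i−1)·q/(p+q)⌋` and `b` (encoded `true`) otherwise. -/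
def christoffel (p q : ℕ) : List Bool :=
  (List.range (p + q)).map (fun i => decide (((i + 1) * q) / (p + q) ≠ (i * q) / (p + q)))

/-- A word is a Christoffel word if it is the lower Christoffel word of slope
`q / p` for some coprime pair `(p, q) ≠ (0, 0)`. -/
def IsChristoffel (w : List Bool) : Prop :=
  ∃ p q : ℕ, Nat.Coprime p q ∧ (p, q) ≠ (0, 0) ∧ w = christoffel p q

def chStep : (List Bool × List Bool) → Bool → (List Bool × List Bool)
  | (u, v), false => (u, u ++ v)
  | (u, v), true => (u ++ v, v)

/-- The Christoffel tree: words are lists over `Bool` with `false` encoding the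
letter `a` and `true` encoding the letter `b`. `ch [] = (a, b)`, and if
`ch s = (u,v)` then `ch (s ++ [false]) = (u, u ++ v)` and
`ch (s ++ [true]) = (u ++ v, v)`. -/
def ch (s : List Bool) : List Bool × List Bool := s.foldl chStep ([false], [true])

/-- Below the cut point, `⌊i Q / N⌋ = ⌊i q / n⌋`. -/
theorem div_left {n N q Q i : ℕ} (hn : 0 < n) (hN : n < N) (h : n * Q = q * N + 1)
    (hi : i ≤ n) : i * Q / N = i * q / n := by
  have hd := Nat.div_add_mod (i * q) n
  have hr := Nat.mod_lt (i * q) hn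
  generalize i * q / n = k at *
  generalize i * q % n = r at *
  have key : n * (i * Q) = N * (n * k + r) + i := by
    rw [hd]; linear_combination i * h
  have hrN : N * (r + 1) ≤ N * n := Nat.mul_le_mul_left N hr
  refine Nat.div_eq_of_lt_le ?_ ?_
  · refine Nat.le_of_mul_le_mul_left ?_ hn
    rw [key]; nlinarith [Nat.zero_le (N * r)]
  · refine Nat.lt_of_mul_lt_mul_left (a := n) ?_
    rw [key]; nlinarith

/-- Beyond the cut point `n`, `⌊(n + j) Q / N⌋ = q + ⌊j q' / n'⌋`. -/
theorem div_right {n n' q q' N Q j : ℕ} (hn' : 0 < n') (hN : n' < N) (h : n * Q = q * N + 1)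
    (h' : n' * Q + 1 = q' * N) (hj : j ≤ n') : (n + j) * Q / N = q + j * q' / n' := by
  have hd := Nat.div_add_mod (j * q') n'
  have hr := Nat.mod_lt (j * q') hn'
  generalize j * q' / n' = k at *
  generalize j * q' % n' = r at *
  have e : (n + j) * Q = (1 + j * Q) + N * q := by linear_combination h
  rw [e, Nat.add_mul_div_left _ _ (by omega), add_comm]
  congr 1
  have key : n' * (1 + j * Q) + j = N * (n' * k + r) + n' := by
    rw [hd]; linear_combination j * h'
  have hrN : N * (r + 1) ≤ N * n' := Nat.mul_le_mul_left N hr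
  refine Nat.div_eq_of_lt_le ?_ ?_
  · refine Nat.le_of_mul_le_mul_left ?_ hn'
    nlinarith [Nat.zero_le (N * r)]
  · refine Nat.lt_of_mul_lt_mul_left (a := n') ?_
    nlinarith

/-- The standard factorization of a Christoffel word at a unimodular pair of slopes. -/
theorem christoffel_append {p q p' q' : ℕ} (h : p * q' = q * p' + 1) :
    christoffel (p + p') (q + q') = christoffel p q ++ christoffel p' q' := by
  have hn : 0 < p + q := by
    rcases Nat.eq_zero_or_pos p with rfl | hp <;> omega
  have hn' : 0 < p' + q' := by
    rcases Nat.eq_zero_or_pos q' with rfl | hq <;> omega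
  have h1 : (p + q) * (q + q') = q * (p + q + (p' + q')) + 1 := by linear_combination h
  have h2 : (p' + q') * (q + q') + 1 = q' * (p + q + (p' + q')) := by linear_combination -h
  unfold christoffel
  rw [show p + p' + (q + q') = (p + q) + (p' + q') by ring, List.range_add, List.map_append,
    List.map_map]
  congr 1
  · refine List.map_congr_left fun i hi => ?_
    have hi := List.mem_range.1 hi
    rw [div_left hn (by omega) h1 (by omega : i + 1 ≤ p + q),
      div_left hn (by omega) h1 (by omega : i ≤ p + q)]
  · refine List.map_congr_left fun j hj => ?_
    have hj := List.mem_range.1 hj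
    simp only [Function.comp_apply]
    rw [add_assoc (p + q) j 1, div_right hn' (by omega) h1 h2 (by omega : j + 1 ≤ p' + q'),
      div_right hn' (by omega) h1 h2 (by omega : j ≤ p' + q')]
    simp

/-- Every vertex of the tree is a pair of Christoffel words with unimodular slopes. -/
theorem ch_spec (s : List Bool) : ∃ p q p' q' : ℕ, p * q' = q * p' + 1 ∧
    ch s = (christoffel p q, christoffel p' q') := by
  induction s using List.reverseRecOn with
  | nil => exact ⟨1, 0, 0, 1, rfl, by decide⟩
  | append_singleton s c ih =>
    obtain ⟨p, q, p', q', h, e⟩ := ih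
    have e' : ch (s ++ [c]) = chStep (ch s) c := by simp [ch]
    rw [e', e]
    cases c
    · exact ⟨p, q, p + p', q + q', by linear_combination h, by
        rw [christoffel_append h]; rfl⟩
    · exact ⟨p + p', q + q', p', q', by linear_combination h, by
        rw [christoffel_append h]; rfl⟩

theorem isChristoffel_of_coprime {p q : ℕ} (h : Nat.Coprime p q) :
    IsChristoffel (christoffel p q) :=
  ⟨p, q, h, by rintro ⟨⟩; simp at h, rfl⟩

/-- A Bézout relation over `ℕ` forces coprimality. -/
theorem coprime_of_bezout {p q x y : ℕ} (h : p * x = q * y + 1) : Nat.Coprime p q := by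
  have h1 : Nat.gcd p q ∣ q * y + 1 := h ▸ (Nat.gcd_dvd_left p q).mul_right x
  exact Nat.dvd_one.1 ((Nat.dvd_add_right ((Nat.gcd_dvd_right p q).mul_right y)).1 h1)

/-- In the Christoffel tree all words occurring are Christoffel words: for every
vertex `(u, v)`, the words `u`, `v` and the concatenation `u ++ v` are Christoffel
words. -/
theorem christoffelTree_all_christoffel :
    ∀ s : List Bool, ∀ u v : List Bool, ch s = (u, v) →
      IsChristoffel u ∧ IsChristoffel v ∧ IsChristoffel (u ++ v) := by
  intro s u v hs
  obtain ⟨p, q, p', q', h, e⟩ := ch_spec s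
  obtain ⟨rfl, rfl⟩ := Prod.mk.inj (hs.symm.trans e)
  refine ⟨isChristoffel_of_coprime (coprime_of_bezout h),
    isChristoffel_of_coprime (coprime_of_bezout (x := p) (y := q) ?_).symm, ?_⟩
  · linarith
  · rw [← christoffel_append h]
    exact isChristoffel_of_coprime (coprime_of_bezout (x := q') (y := p') (by linear_combination h))
end

section
/- Replacing each vertex (u,v) of the Christoffel tree with the fraction |u|/|v| yields the Calkin–Wilf tree: for every finite binary sequence s, writing ch(s) = (u, v) and cw(s) = (x, y), one has |u| = x and |v| = y. -/
/-- The pair of lengths intertwines one step of the Christoffel tree with one step of the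
Calkin–Wilf tree, because length turns concatenation into addition. -/
lemma lengths_chStep (p : List Bool × List Bool) (c : Bool) :
    Prod.map List.length List.length (chStep p c) =
      cwStep (Prod.map List.length List.length p) c := by
  obtain ⟨u, v⟩ := p
  cases c <;> simp [chStep, cwStep]

/-- Replacing each vertex `(u, v)` of the Christoffel tree by `|u| / |v|` yields
the Calkin–Wilf tree. -/
theorem christoffelTree_lengths_eq_calkinWilf :
    ∀ s : List Bool, ∀ u v : List Bool, ∀ x y : ℕ,
      ch s = (u, v) → cw s = (x, y) → u.length = x ∧ v.length = y := by
  intro s u v x y hch hcw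
  have h : cw s = Prod.map List.length List.length (ch s) :=
    List.foldl_hom (Prod.map List.length List.length) (l := s) (init := ([false], [true]))
      (fun p c => (lengths_chStep p c).symm)
  rw [hch, hcw] at h
  simpa [eq_comm] using h
end

section
/- Replacing each vertex (u,v) of the Christoffel tree with the fraction |u·v|_b / |u·v|_a yields the Stern–Brocot tree: for every finite binary sequence s, writing ch(s) = (u, v) and sb(s) = ((a,b),(c,d)), one has |u·v|_b = a+c and |u·v|_a = b+d. -/
/-- The letter-count vector `(|w|_b, |w|_a)` of a word, ordered as numerator and denominator. -/
def letterCounts (w : List Bool) : ℕ × ℕ := (w.count true, w.count false)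

theorem sbStep_letterCounts (p : List Bool × List Bool) (x : Bool) :
    sbStep (p.map letterCounts letterCounts) x =
      (chStep p x).map letterCounts letterCounts := by
  obtain ⟨u, v⟩ := p
  cases x <;> simp [sbStep, chStep, letterCounts]

/-- The words of `ch s` themselves, not just their product, have as letter counts the two
Stern–Brocot bounds. -/
theorem sb_eq_map_letterCounts_ch (s : List Bool) :
    sb s = (ch s).map letterCounts letterCounts :=
  List.foldl_hom (Prod.map letterCounts letterCounts) (init := ([false], [true])) (l := s)
    sbStep_letterCounts

/-- Replacing each vertex `(u, v)` of the Christoffel tree by `|u·v|_b / |u·v|_a`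
yields the Stern–Brocot tree (`a` is encoded `false`, `b` is encoded `true`). -/
theorem christoffelTree_counts_eq_sternBrocot :
    ∀ s : List Bool, ∀ u v : List Bool, ∀ a b c d : ℕ,
      ch s = (u, v) → sb s = ((a, b), (c, d)) →
      (u ++ v).count true = a + c ∧ (u ++ v).count false = b + d := by
  intro s u v a b c d hch hsb
  rw [sb_eq_map_letterCounts_ch, hch] at hsb
  simp only [Prod.map_apply, letterCounts, Prod.mk.injEq] at hsb
  obtain ⟨⟨rfl, rfl⟩, rfl, rfl⟩ := hsb
  exact ⟨List.count_append, List.count_append⟩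
end

section
/- Determinant invariant of the Christoffel tree: for every finite binary sequence s, writing ch(s) = (u, v), one has |u|_a·|v|_b − |u|_b·|v|_a = 1. -/
/-- Determinant invariant of the Christoffel tree:
`|u|_a·|v|_b − |u|_b·|v|_a = 1` (`a` is encoded `false`, `b` is encoded `true`). -/
theorem christoffelTree_det :
    ∀ s : List Bool, ∀ u v : List Bool, ch s = (u, v) →
      (u.count false : ℤ) * (v.count true : ℤ) - (u.count true : ℤ) * (v.count false : ℤ) = 1 := by
  intro s
  -- Snoc induction matches the recursion of `ch`, which acts at the leaves of the tree.
  induction s using List.reverseRecOn with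
  | nil =>
    intro u v h
    obtain ⟨rfl, rfl⟩ := Prod.mk.inj h
    simp
  | append_singleton s c ih =>
    intro u v h
    obtain ⟨x, y, hxy⟩ : ∃ x y, ch s = (x, y) := ⟨_, _, rfl⟩
    have hdet := ih x y hxy
    have hstep : ch (s ++ [c]) = chStep (x, y) c := by
      rw [← hxy]
      simp [ch]
    rw [hstep] at h
    -- Counts are additive under concatenation, so each step adds one column of the
    -- matrix of letter counts to the other, which preserves the determinant.
    cases c <;>
    · obtain ⟨rfl, rfl⟩ := Prod.mk.inj h
      simp only [List.count_append, Nat.cast_add]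
      linarith
end

section
/- In the Cohn tree, all words occurring are Christoffel words: for every finite binary sequence s, writing co(s) = (u, v), the words u, v, and the concatenation u·v are all Christoffel words. -/
/-- The substitution replacing every occurrence of the letter `a` (encoded
`false`) by the two-letter word `ab` (encoded `[false, true]`), leaving `b`
unchanged. -/
def alpha : List Bool → List Bool
  | [] => []
  | c :: w => (if c then [true] else [false, true]) ++ alpha w

/-- The substitution replacing every occurrence of the letter `b` (encoded
`true`) by the two-letter word `ab` (encoded `[false, true]`), leaving `a`
unchanged. -/
def beta : List Bool → List Bool
  | [] => []
  | c :: w => (if c then [false, true] else [false]) ++ beta w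

def coStep : (List Bool × List Bool) → Bool → (List Bool × List Bool)
  | (u, v), false => (beta u, beta v)
  | (u, v), true => (alpha u, alpha v)

/-- The Cohn tree: `co [] = (a, b)`, and if `co s = (u,v)` then
`co (s ++ [false]) = (β u, β v)` and `co (s ++ [true]) = (α u, α v)`. -/
def co (s : List Bool) : List Bool × List Bool := s.foldl coStep ([false], [true])

/-- The word of length `n` emitted by the rotation with parameters `(p, q)` started in state `r`:
a state `r < p` emits `a` and moves to `r + q`, any other state emits `b` and moves to `r - p`. -/
def rotationWord (p q : ℕ) : ℕ → ℕ → List Bool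
  | _, 0 => []
  | r, n + 1 =>
    if r < p then false :: rotationWord p q (r + q) n else true :: rotationWord p q (r - p) n

lemma map_range'_eq_rotationWord (p q : ℕ) (h : 0 < p + q) (n i : ℕ) :
    (List.range' i n).map
      (fun i => decide (((i + 1) * q) / (p + q) ≠ (i * q) / (p + q))) =
    rotationWord p q (i * q % (p + q)) n := by
  induction n generalizing i with
  | zero => rfl
  | succ n ih =>
    rw [List.range'_succ, List.map_cons, ih, rotationWord]
    have hr := Nat.mod_lt (i * q) h
    have hd := Nat.mod_add_div (i * q) (p + q)
    generalize i * q % (p + q) = r at *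
    generalize i * q / (p + q) = d at *
    have e : (i + 1) * q = r + q + (p + q) * d := by rw [add_mul, one_mul]; omega
    rw [e, Nat.add_mul_div_left _ _ h, Nat.add_mul_mod_self_left]
    split_ifs with hp
    · rw [Nat.div_eq_of_lt (by omega), Nat.mod_eq_of_lt (by omega)]
      simp
    · have e2 : r + q = (r - p) + (p + q) * 1 := by omega
      rw [e2, Nat.add_mul_div_left _ _ h, Nat.add_mul_mod_self_left,
        Nat.div_eq_of_lt (by omega), Nat.mod_eq_of_lt (by omega)]
      simp

lemma christoffel_eq_rotationWord (p q : ℕ) (h : 0 < p + q) :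
    christoffel p q = rotationWord p q 0 (p + q) := by
  rw [christoffel, List.range_eq_range', map_range'_eq_rotationWord p q h]
  simp

/-- Balance of the rotation: the state starts at `r`, gains `q` at each `a` and loses `p` at each
`b`, and never leaves `[0, p + q)`. -/
lemma exists_final_state (p q n r : ℕ) (hr : r < p + q) :
    ∃ r' < p + q, r + (rotationWord p q r n).count false * q =
      r' + (rotationWord p q r n).count true * p := by
  induction n generalizing r with
  | zero => exact ⟨r, hr, by simp [rotationWord]⟩
  | succ n ih =>
    rw [rotationWord]
    split_ifs with hp
    · obtain ⟨r', h1, h2⟩ := ih (r + q) (by omega)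
      refine ⟨r', h1, ?_⟩
      simp [add_mul]
      omega
    · obtain ⟨r', h1, h2⟩ := ih (r - p) (by omega)
      refine ⟨r', h1, ?_⟩
      simp [add_mul]
      omega

lemma length_rotationWord (p q n r : ℕ) : (rotationWord p q r n).length = n := by
  induction n generalizing r with
  | zero => rfl
  | succ n ih =>
    rw [rotationWord]
    split_ifs <;> simp [ih]

lemma count_rotationWord (p q : ℕ) (h : 0 < p + q) :
    (rotationWord p q 0 (p + q)).count false = p ∧
      (rotationWord p q 0 (p + q)).count true = q := by
  obtain ⟨r', h1, h2⟩ := exists_final_state p q (p + q) 0 h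
  have h3 := List.count_false_add_count_true (rotationWord p q 0 (p + q))
  rw [length_rotationWord] at h3
  generalize (rotationWord p q 0 (p + q)).count false = A at *
  generalize (rotationWord p q 0 (p + q)).count true = B at *
  -- With `A + B = p + q`, the final state is `(A - p) * (p + q)`, so it can only be `0`.
  have h4 : A * (p + q) = r' + p * (p + q) := by
    have h5 : p * (p + q) = p * (A + B) := by rw [h3]
    rw [h5]
    linarith
  have h5 : A < p + 1 := by
    by_contra hA
    have := Nat.mul_le_mul_right (p + q) (not_lt.mp hA)
    linarith
  have h6 : p ≤ A := by
    by_contra hA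
    have := Nat.mul_le_mul_right (p + q) (show A + 1 ≤ p by omega)
    linarith
  omega

lemma alpha_rotationWord (p q n r : ℕ) (hr : r < p + q) :
    alpha (rotationWord p q r n) =
      rotationWord p (p + q) r (n + (rotationWord p q r n).count false) := by
  induction n generalizing r with
  | zero => rfl
  | succ n ih =>
    by_cases hp : r < p
    · have e : rotationWord p q r (n + 1) = false :: rotationWord p q (r + q) n := by
        simp [rotationWord, hp]
      have e2 : ∀ m, n + 1 + (m + 1) = (n + m) + 1 + 1 := by intro m; omega
      rw [e, alpha, ih _ (by omega), List.count_cons_self, e2]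
      simp [rotationWord, hp, show r + (p + q) - p = r + q by omega]
      omega
    · have e : rotationWord p q r (n + 1) = true :: rotationWord p q (r - p) n := by
        simp [rotationWord, hp]
      rw [e, alpha, ih _ (by omega), List.count_cons_of_ne (by simp), add_right_comm]
      simp [rotationWord, hp]

lemma beta_rotationWord (p q n r : ℕ) (hr : r < p + q) :
    beta (rotationWord p q r n) =
      rotationWord (p + q) q r (n + (rotationWord p q r n).count true) := by
  induction n generalizing r with
  | zero => rfl
  | succ n ih =>
    by_cases hp : r < p
    · have e : rotationWord p q r (n + 1) = false :: rotationWord p q (r + q) n := by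
        simp [rotationWord, hp]
      rw [e, beta, ih _ (by omega), List.count_cons_of_ne (by simp), add_right_comm]
      simp [rotationWord, hr]
    · have e : rotationWord p q r (n + 1) = true :: rotationWord p q (r - p) n := by
        simp [rotationWord, hp]
      have e2 : ∀ m, n + 1 + (m + 1) = (n + m) + 1 + 1 := by intro m; omega
      rw [e, beta, ih _ (by omega), List.count_cons_self, e2]
      simp [rotationWord, hr, show ¬ r < p by omega, show r + q - (p + q) = r - p by omega]

lemma alpha_christoffel (p q : ℕ) (h : 0 < p + q) :
    alpha (christoffel p q) = christoffel p (p + q) := by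
  rw [christoffel_eq_rotationWord p q h, alpha_rotationWord _ _ _ _ h,
    (count_rotationWord p q h).1, christoffel_eq_rotationWord p (p + q) (by omega),
    add_comm (p + q) p]

lemma beta_christoffel (p q : ℕ) (h : 0 < p + q) :
    beta (christoffel p q) = christoffel (p + q) q := by
  rw [christoffel_eq_rotationWord p q h, beta_rotationWord _ _ _ _ h,
    (count_rotationWord p q h).2, christoffel_eq_rotationWord (p + q) q (by omega)]

lemma IsChristoffel.alpha {w : List Bool} (hw : IsChristoffel w) : IsChristoffel (alpha w) := by
  obtain ⟨p, q, hc, h0, rfl⟩ := hw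
  have h : 0 < p + q := by
    rw [Ne, Prod.mk.injEq] at h0
    omega
  refine ⟨p, p + q, by simpa using hc, ?_, alpha_christoffel p q h⟩
  rw [Ne, Prod.mk.injEq]
  omega

lemma IsChristoffel.beta {w : List Bool} (hw : IsChristoffel w) : IsChristoffel (beta w) := by
  obtain ⟨p, q, hc, h0, rfl⟩ := hw
  have h : 0 < p + q := by
    rw [Ne, Prod.mk.injEq] at h0
    omega
  refine ⟨p + q, q, by simpa using hc, ?_, beta_christoffel p q h⟩
  rw [Ne, Prod.mk.injEq]
  omega

lemma alpha_append (u v : List Bool) : alpha (u ++ v) = alpha u ++ alpha v := by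
  induction u with
  | nil => rfl
  | cons c u ih => simp [alpha, ih]

lemma beta_append (u v : List Bool) : beta (u ++ v) = beta u ++ beta v := by
  induction u with
  | nil => rfl
  | cons c u ih => simp [beta, ih]

lemma foldl_coStep_isChristoffel (s : List Bool) (x : List Bool × List Bool)
    (hx : IsChristoffel x.1 ∧ IsChristoffel x.2 ∧ IsChristoffel (x.1 ++ x.2)) :
    IsChristoffel (s.foldl coStep x).1 ∧ IsChristoffel (s.foldl coStep x).2 ∧
      IsChristoffel ((s.foldl coStep x).1 ++ (s.foldl coStep x).2) := by
  induction s generalizing x with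
  | nil => exact hx
  | cons c s ih =>
    rw [List.foldl_cons]
    apply ih
    obtain ⟨u, v⟩ := x
    obtain ⟨hu, hv, huv⟩ := hx
    cases c
    · exact ⟨hu.beta, hv.beta, by simpa [coStep, ← beta_append] using huv.beta⟩
    · exact ⟨hu.alpha, hv.alpha, by simpa [coStep, ← alpha_append] using huv.alpha⟩

/-- In the Cohn tree all words occurring are Christoffel words: for every vertex
`(u, v)`, the words `u`, `v` and the concatenation `u ++ v` are Christoffel
words. -/
theorem cohnTree_all_christoffel :
    ∀ s : List Bool, ∀ u v : List Bool, co s = (u, v) →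
      IsChristoffel u ∧ IsChristoffel v ∧ IsChristoffel (u ++ v) := by
  intro s u v h
  have := foldl_coStep_isChristoffel s ([false], [true])
    ⟨⟨1, 0, by decide, by decide, by decide⟩, ⟨0, 1, by decide, by decide, by decide⟩,
      ⟨1, 1, by decide, by decide, by decide⟩⟩
  rw [co] at h
  rwa [h] at this
end

section
/- Replacing each vertex (u,v) of the Cohn tree with the fraction |u|/|v| yields the Stern–Brocot tree: for every finite binary sequence s, writing co(s) = (u, v) and sb(s) = ((a,b),(c,d)), one has |u| = a+c and |v| = b+d. -/
theorem count_alpha (w : List Bool) :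
    (alpha w).count false = w.count false ∧
      (alpha w).count true = w.count true + w.count false := by
  induction w with
  | nil => simp [alpha]
  | cons c w ih => cases c <;> simp [alpha, ih.1, ih.2, -List.count_true_add_count_false] <;> omega

theorem count_beta (w : List Bool) :
    (beta w).count true = w.count true ∧
      (beta w).count false = w.count true + w.count false := by
  induction w with
  | nil => simp [beta]
  | cons c w ih => cases c <;> simp [beta, ih.1, ih.2, -List.count_true_add_count_false] <;> omega

/-- The Stern–Brocot bounds at `s` are the letter counts of the Cohn pair at `s`: the `b`-counts
form the left bound and the `a`-counts form the right bound. -/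
theorem sb_eq_counts (s : List Bool) :
    sb s = (((co s).1.count true, (co s).2.count true),
      ((co s).1.count false, (co s).2.count false)) := by
  induction s using List.reverseRecOn with
  | nil => simp [sb, co]
  | append_singleton s x ih =>
    have hco : co (s ++ [x]) = coStep (co s) x := by simp [co]
    have hsb : sb (s ++ [x]) = sbStep (sb s) x := by simp [sb]
    rw [hco, hsb, ih]
    cases x <;> simp [coStep, sbStep, count_alpha, count_beta, add_comm]

/-- Replacing each vertex `(u, v)` of the Cohn tree by `|u| / |v|` yields the
Stern–Brocot tree. -/
theorem cohnTree_lengths_eq_sternBrocot :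
    ∀ s : List Bool, ∀ u v : List Bool, ∀ a b c d : ℕ,
      co s = (u, v) → sb s = ((a, b), (c, d)) →
      u.length = a + c ∧ v.length = b + d := by
  intro s u v a b c d hco hsb
  rw [sb_eq_counts, hco] at hsb
  simp only [Prod.mk.injEq] at hsb
  obtain ⟨⟨rfl, rfl⟩, rfl, rfl⟩ := hsb
  exact ⟨(List.count_true_add_count_false u).symm, (List.count_true_add_count_false v).symm⟩
end

section
/- Determinant invariant of the Cohn tree: for every finite binary sequence s, writing co(s) = (u, v), one has |u|_a·|v|_b − |u|_b·|v|_a = 1. -/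
theorem count_false_alpha (w : List Bool) : (alpha w).count false = w.count false := by
  induction w with
  | nil => rfl
  | cons c w ih => cases c <;> simp [alpha, ih]

theorem count_true_alpha (w : List Bool) :
    (alpha w).count true = w.count false + w.count true := by
  induction w with
  | nil => rfl
  | cons c w ih => cases c <;> simp [alpha, ih, -List.count_false_add_count_true] <;> omega

theorem count_false_beta (w : List Bool) :
    (beta w).count false = w.count false + w.count true := by
  induction w with
  | nil => rfl
  | cons c w ih => cases c <;> simp [beta, ih, -List.count_false_add_count_true] <;> omega

theorem count_true_beta (w : List Bool) : (beta w).count true = w.count true := by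
  induction w with
  | nil => rfl
  | cons c w ih => cases c <;> simp [beta, ih]

/-- The determinant of the occurrence vectors of a pair of words. -/
def countDet (p : List Bool × List Bool) : ℤ :=
  (p.1.count false : ℤ) * (p.2.count true : ℤ) - (p.1.count true : ℤ) * (p.2.count false : ℤ)

theorem countDet_coStep (p : List Bool × List Bool) (c : Bool) :
    countDet (coStep p c) = countDet p := by
  cases c <;>
    simp only [countDet, coStep, count_false_alpha, count_true_alpha, count_false_beta,
      count_true_beta] <;> push_cast <;> ring

theorem countDet_foldl (s : List Bool) (p : List Bool × List Bool) :
    countDet (s.foldl coStep p) = countDet p := by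
  induction s generalizing p with
  | nil => rfl
  | cons c s ih => rw [List.foldl_cons, ih, countDet_coStep]

/-- Determinant invariant of the Cohn tree:
`|u|_a·|v|_b − |u|_b·|v|_a = 1` (`a` is encoded `false`, `b` is encoded `true`). -/
theorem cohnTree_det :
    ∀ s : List Bool, ∀ u v : List Bool, co s = (u, v) →
      (u.count false : ℤ) * (v.count true : ℤ) - (u.count true : ℤ) * (v.count false : ℤ) = 1 := by
  intro s u v h
  have hdet : countDet (co s) = 1 := countDet_foldl s _
  rwa [h] at hdet
end

section
/- Determinant criterion for concatenation of Christoffel words: if u and v are Christoffel words, then the concatenation u·v is a Christoffel word if and only if |u|_a·|v|_b − |u|_b·|v|_a = 1. -/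
/-! ### Prefix counts -/

lemma length_christoffel (p q : ℕ) : (christoffel p q).length = p + q := by
  simp [christoffel]

lemma count_take_succ (w : List Bool) (i : ℕ) (h : i < w.length) :
    (w.take (i + 1)).count true = (w.take i).count true + if w[i] = true then 1 else 0 := by
  rw [List.take_add_one, List.count_append, List.getElem?_eq_getElem h]
  cases w[i] <;> simp

/-- Consecutive floors differ by at most one, so prefix counts telescope. -/
lemma floor_succ (n q i : ℕ) (hn : 0 < n) (hq : q ≤ n) :
    (i + 1) * q / n = i * q / n + if (i + 1) * q / n ≠ i * q / n then 1 else 0 := by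
  have h1 : i * q / n ≤ (i + 1) * q / n := Nat.div_le_div_right (by nlinarith)
  have h2 : (i + 1) * q / n ≤ (i * q + n) / n := Nat.div_le_div_right (by nlinarith)
  rw [Nat.add_div_right _ hn] at h2
  split_ifs <;> omega

lemma count_take_christoffel (p q i : ℕ) (hi : i ≤ p + q) :
    ((christoffel p q).take i).count true = i * q / (p + q) := by
  induction i with
  | zero => simp
  | succ i ih =>
    rw [count_take_succ _ _ (by rw [length_christoffel]; omega), ih (by omega),
      floor_succ (p + q) q i (by omega) (by omega)]
    simp [christoffel]

/-- A word is determined by its length and the numbers of `b` in its prefixes. -/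
lemma eq_of_count_take (w z : List Bool) (hl : w.length = z.length)
    (h : ∀ i ≤ w.length, (w.take i).count true = (z.take i).count true) : w = z := by
  refine List.ext_getElem hl fun i h1 h2 => ?_
  have a := h i h1.le
  have b := h (i + 1) h1
  rw [count_take_succ _ _ h1, count_take_succ _ _ h2, a] at b
  cases hw : w[i] <;> cases hz : z[i] <;> simp_all

lemma eq_christoffel_iff (w : List Bool) (p q : ℕ) :
    w = christoffel p q ↔
      w.length = p + q ∧ ∀ i ≤ p + q, (w.take i).count true = i * q / (p + q) := by
  constructor
  · rintro rfl
    exact ⟨length_christoffel p q, fun i hi => count_take_christoffel p q i hi⟩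
  · rintro ⟨hl, h⟩
    refine eq_of_count_take _ _ (by rw [hl, length_christoffel]) fun i hi => ?_
    rw [h i (hl ▸ hi), count_take_christoffel p q i (hl ▸ hi)]

lemma count_true_christoffel (p q : ℕ) (h : 0 < p + q) : (christoffel p q).count true = q := by
  have := count_take_christoffel p q (p + q) le_rfl
  rwa [List.take_of_length_le (length_christoffel p q).le, Nat.mul_div_cancel_left _ h] at this

lemma count_false_christoffel (p q : ℕ) (h : 0 < p + q) : (christoffel p q).count false = p := by
  have h1 := count_true_christoffel p q h
  have h2 := length_christoffel p q
  have h3 := List.count_not_add_count (christoffel p q) true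
  simp only [Bool.not_true] at h3
  omega

/-! ### Arithmetic of floors -/

lemma floor_left (n₁ n₂ q₁ q₂ i : ℕ) (hn₂ : 0 < n₂) (hi : i ≤ n₁)
    (hn₁ : 0 < n₁) (hD : n₁ * q₂ = q₁ * n₂ + 1) :
    i * (q₁ + q₂) / (n₁ + n₂) = i * q₁ / n₁ := by
  have hdm := Nat.div_add_mod (i * q₁) n₁
  have hr := Nat.mod_lt (i * q₁) hn₁
  generalize i * q₁ / n₁ = k at *
  generalize i * q₁ % n₁ = r at *
  -- Multiply through by `n₁`: the numerator becomes `k n₁ n + r n + i`, with `r n + i < n₁ n`.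
  have key : n₁ * (i * (q₁ + q₂)) = k * n₁ * (n₁ + n₂) + r * (n₁ + n₂) + i := by
    zify at *
    linear_combination (-((n₁ : ℤ) + n₂)) * hdm + i * hD
  have hr' : (r + 1) * (n₁ + n₂) ≤ n₁ * (n₁ + n₂) := Nat.mul_le_mul_right _ hr
  apply Nat.div_eq_of_lt_le
  · refine Nat.le_of_mul_le_mul_left ?_ hn₁
    nlinarith
  · refine Nat.lt_of_mul_lt_mul_left (a := n₁) ?_
    nlinarith

lemma floor_right (n₁ n₂ q₁ q₂ j : ℕ) (hn₂ : 0 < n₂) (hj : j ≤ n₂)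
    (hn₁ : 0 < n₁) (hD : n₁ * q₂ = q₁ * n₂ + 1) :
    (n₁ + j) * (q₁ + q₂) / (n₁ + n₂) = q₁ + j * q₂ / n₂ := by
  have hdm := Nat.div_add_mod (j * q₂) n₂
  have hr := Nat.mod_lt (j * q₂) hn₂
  generalize j * q₂ / n₂ = k at *
  generalize j * q₂ % n₂ = r at *
  -- Multiply through by `n₂`: the numerator becomes `(q₁ + k) n₂ n + (r + 1) n - (n₁ + j)`.
  have key : n₂ * ((n₁ + j) * (q₁ + q₂)) + (n₁ + j) =
      (q₁ + k) * n₂ * (n₁ + n₂) + (r + 1) * (n₁ + n₂) := by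
    zify at *
    linear_combination (-((n₁ : ℤ) + n₂)) * hdm + (n₂ - j) * hD
  have hr' : (r + 1) * (n₁ + n₂) ≤ n₂ * (n₁ + n₂) := Nat.mul_le_mul_right _ hr
  apply Nat.div_eq_of_lt_le
  · refine Nat.le_of_mul_le_mul_left ?_ hn₂
    nlinarith
  · refine Nat.lt_of_mul_lt_mul_left (a := n₂) ?_
    nlinarith

/-- If the index `i` with `i q ≡ 1 (mod n)` lies in the first block, it is the end of that block,
and the determinant is one. -/
lemma det_eq_one_of_le (n₁ n₂ q₁ q₂ i k : ℕ) (hn₁ : 0 < n₁) (hn₂ : 0 < n₂)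
    (hc : Nat.Coprime n₁ q₁) (hi0 : 0 < i) (hi : i ≤ n₁)
    (hD : q₁ * n₂ < n₁ * q₂) (hk : i * (q₁ + q₂) = k * (n₁ + n₂) + 1)
    (hf : i * q₁ / n₁ = k) : n₁ * q₂ = q₁ * n₂ + 1 := by
  have hdm := Nat.div_add_mod (i * q₁) n₁
  rw [hf] at hdm
  generalize i * q₁ % n₁ = s at *
  have key : i * (n₁ * q₂) + s * (n₁ + n₂) = i * (q₁ * n₂) + n₁ := by
    zify at *
    linear_combination ((n₁ : ℤ) + n₂) * hdm + n₁ * hk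
  have hs : s = 0 := by
    by_contra h
    have : 1 * (n₁ + n₂) ≤ s * (n₁ + n₂) := Nat.mul_le_mul_right _ (by omega)
    have := Nat.mul_le_mul_left i hD.le
    omega
  subst hs
  have hdvd : n₁ ∣ i := hc.dvd_of_dvd_mul_right ⟨k, by omega⟩
  have : i = n₁ := le_antisymm hi (Nat.le_of_dvd hi0 hdvd)
  subst this
  refine Nat.eq_of_mul_eq_mul_left hi0 ?_
  linarith

/-- The index `i` with `i q ≡ 1 (mod n)` cannot lie strictly inside the second block; here
`i = n₁ + j`. -/
lemma false_of_right (n₁ n₂ q₁ q₂ j k : ℕ) (hn₁ : 0 < n₁)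
    (hc : Nat.Coprime n₂ q₂) (hj0 : 0 < j) (hj : j < n₂)
    (hD : q₁ * n₂ < n₁ * q₂) (hk : (n₁ + j) * (q₁ + q₂) = k * (n₁ + n₂) + 1)
    (hf : q₁ + j * q₂ / n₂ = k) : False := by
  have hdm := Nat.div_add_mod (j * q₂) n₂
  generalize j * q₂ / n₂ = m at *
  generalize j * q₂ % n₂ = s at *
  obtain ⟨d, rfl⟩ := Nat.exists_eq_add_of_lt hj
  have key : s * (n₁ + (j + d + 1)) + (d + 1) * (n₁ * q₂) =
      (j + d + 1) + (d + 1) * (q₁ * (j + d + 1)) := by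
    subst hf
    zify at *
    linear_combination ((n₁ : ℤ) + (j + d + 1)) * hdm + (j + d + 1) * hk
  have hs : s = 0 := by
    by_contra h
    have : 1 * (n₁ + (j + d + 1)) ≤ s * (n₁ + (j + d + 1)) := Nat.mul_le_mul_right _ (by omega)
    have := Nat.mul_le_mul_left (d + 1) hD.le
    omega
  subst hs
  have hdvd : (j + d + 1) ∣ j := hc.dvd_of_dvd_mul_right ⟨m, by omega⟩
  have := Nat.le_of_dvd hj0 hdvd
  omega

/-! ### The determinant criterion -/

/-- The determinant, with `|u|_a` replaced by `|u|`. -/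
lemma det_iff (p₁ q₁ p₂ q₂ : ℕ) :
    (p₁ : ℤ) * q₂ - q₁ * p₂ = 1 ↔ (p₁ + q₁) * q₂ = q₁ * (p₂ + q₂) + 1 := by
  zify
  constructor <;> intro h <;> linarith

/-- Prefix counts of a concatenation of two Christoffel words. -/
lemma count_take_append (p₁ q₁ p₂ q₂ : ℕ) (h₁ : 0 < p₁ + q₁) :
    (∀ i ≤ p₁ + q₁, ((christoffel p₁ q₁ ++ christoffel p₂ q₂).take i).count true =
      i * q₁ / (p₁ + q₁)) ∧
    (∀ j ≤ p₂ + q₂, ((christoffel p₁ q₁ ++ christoffel p₂ q₂).take (p₁ + q₁ + j)).count true =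
      q₁ + j * q₂ / (p₂ + q₂)) := by
  constructor
  · intro i hi
    rw [List.take_append_of_le_length (by rwa [length_christoffel]),
      count_take_christoffel _ _ _ hi]
  · intro j hj
    have hl := length_christoffel p₁ q₁
    rw [← hl, List.take_length_add_append, List.count_append, count_true_christoffel _ _ h₁,
      count_take_christoffel _ _ _ hj]

/-- Determinant criterion for concatenation of Christoffel words: if `u` and `v`
are Christoffel words, then `u ++ v` is a Christoffel word if and only if
`|u|_a·|v|_b − |u|_b·|v|_a = 1` (`a` is encoded `false`, `b` is encoded `true`). -/
theorem christoffel_append_iff_det :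
    ∀ u v : List Bool, IsChristoffel u → IsChristoffel v →
      (IsChristoffel (u ++ v) ↔
        (u.count false : ℤ) * (v.count true : ℤ) - (u.count true : ℤ) * (v.count false : ℤ) = 1) := by
  rintro _ _ ⟨p₁, q₁, hc₁, h₁, rfl⟩ ⟨p₂, q₂, hc₂, h₂, rfl⟩
  have hn₁ : 0 < p₁ + q₁ := by
    by_contra h; exact h₁ (by ext <;> simp <;> omega)
  have hn₂ : 0 < p₂ + q₂ := by
    by_contra h; exact h₂ (by ext <;> simp <;> omega)
  obtain ⟨hL, hR⟩ := count_take_append p₁ q₁ p₂ q₂ hn₁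
  rw [count_true_christoffel _ _ hn₁, count_true_christoffel _ _ hn₂,
    count_false_christoffel _ _ hn₁, count_false_christoffel _ _ hn₂, det_iff]
  have hlen : (christoffel p₁ q₁ ++ christoffel p₂ q₂).length = (p₁ + q₁) + (p₂ + q₂) := by
    simp [length_christoffel]
  have hc₁' : Nat.Coprime (p₁ + q₁) q₁ := by simpa using hc₁
  have hc₂' : Nat.Coprime (p₂ + q₂) q₂ := by simpa using hc₂
  constructor
  · rintro ⟨p, q, hc, -, hw⟩
    have hcw : Nat.Coprime (p + q) q := by simpa using hc
    obtain ⟨hwl, hwc⟩ := (eq_christoffel_iff _ _ _).1 hw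
    have hn : p + q = (p₁ + q₁) + (p₂ + q₂) := by rw [← hwl, hlen]
    have hq : q = q₁ + q₂ := by
      have := congrArg (List.count true) hw
      rwa [List.count_append, count_true_christoffel _ _ hn₁, count_true_christoffel _ _ hn₂,
        count_true_christoffel _ _ (by omega), eq_comm] at this
    rw [hn] at hcw hwc
    subst hq
    clear hwl hlen hw hn hc hc₁ hc₂ h₁ h₂
    generalize p₁ + q₁ = n₁ at *
    generalize p₂ + q₂ = n₂ at *
    have hL' : ∀ i ≤ n₁, i * q₁ / n₁ = i * (q₁ + q₂) / (n₁ + n₂) := fun i hi => by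
      rw [← hL i hi, hwc i (by omega)]
    have hR' : ∀ j ≤ n₂, q₁ + j * q₂ / n₂ = (n₁ + j) * (q₁ + q₂) / (n₁ + n₂) := fun j hj => by
      rw [← hR j hj, hwc _ (by omega)]
    -- The determinant is the residue of `n₁ q` modulo `n`, which coprimality makes nonzero.
    have hD : q₁ * n₂ < n₁ * q₂ := by
      have h := hL' n₁ le_rfl
      rw [Nat.mul_div_cancel_left _ hn₁] at h
      have hle : q₁ * (n₁ + n₂) ≤ n₁ * (q₁ + q₂) := by
        exact (Nat.mul_le_mul_right _ h.le).trans (Nat.div_mul_le_self _ _)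
      have hne : q₁ * (n₁ + n₂) ≠ n₁ * (q₁ + q₂) := by
        intro he
        have := Nat.le_of_dvd hn₁ (hcw.dvd_of_dvd_mul_right ⟨q₁, by rw [← he, mul_comm]⟩)
        omega
      have := lt_of_le_of_ne hle hne
      nlinarith
    obtain ⟨i, hin, hi⟩ : ∃ i < n₁ + n₂, (q₁ + q₂) * i % (n₁ + n₂) = 1 :=
      Nat.exists_mul_mod_eq_one_of_coprime hcw.symm (by omega)
    have hi0 : 0 < i := by
      rcases Nat.eq_zero_or_pos i with rfl | h
      · simp at hi
      · exact h
    have hk : i * (q₁ + q₂) = (i * (q₁ + q₂) / (n₁ + n₂)) * (n₁ + n₂) + 1 := by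
      have := Nat.div_add_mod' (i * (q₁ + q₂)) (n₁ + n₂)
      rw [mul_comm] at hi
      omega
    rcases le_or_gt i n₁ with hle | hgt
    · exact det_eq_one_of_le n₁ n₂ q₁ q₂ i _ hn₁ hn₂ hc₁' hi0 hle hD hk (hL' i hle)
    · obtain ⟨j, rfl⟩ := Nat.exists_eq_add_of_le hgt.le
      exact (false_of_right n₁ n₂ q₁ q₂ j _ hn₁ hc₂' (by omega) (by omega) hD hk
        (hR' j (by omega))).elim
  · intro hD
    have hsum : p₁ + p₂ + (q₁ + q₂) = (p₁ + q₁) + (p₂ + q₂) := by omega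
    refine ⟨p₁ + p₂, q₁ + q₂, ?_, ?_, ?_⟩
    -- Bézout: `p₁ q - q₁ p` is again the determinant.
    · rw [← Nat.isCoprime_iff_coprime]
      refine ⟨-q₁, p₁, ?_⟩
      zify at hD
      push_cast
      linarith
    · intro h
      rw [Prod.mk.injEq] at h
      omega
    · rw [eq_christoffel_iff, hsum]
      refine ⟨hlen, fun i hi => ?_⟩
      rcases le_or_gt i (p₁ + q₁) with hle | hgt
      · rw [hL i hle, floor_left _ _ _ _ _ hn₂ hle hn₁ hD]
      · obtain ⟨j, rfl⟩ := Nat.exists_eq_add_of_le hgt.le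
        rw [hR j (by omega), floor_right _ _ _ _ _ hn₂ (by omega) hn₁ hD]
end
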